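/- Let p be a real number with 0 < p < 1, let n ≥ 1 be an integer, and set m = ⌊(n+1)/2⌋. Then for every expanding search σ of the cycle C_n, p^{σ⁻¹(m)} + p^{σ⁻¹(n+1−m)} ≤ p^m + p^{n+1−m}. (This is the Hider's guarantee in Theorem 3: hiding equiprobably at vertices ⌊(n+1)/2⌋ and ⌈(n+1)/2⌉ = n+1−m caps the expected payoff at (p^{⌊(n+1)/2⌋} + p^{⌈(n+1)/2⌉})/2 against every expanding search.) -/

import Mathlib

/-- Adjacency in the cycle `C n` with vertex set `{0, 1, …, n}`:
edges `{j, j+1}` for `j = 0, …, n-1`, and the edge `{n, 0}`. -/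
def CycleAdj (n : ℕ) (u v : ℕ) : Prop :=
  v = u + 1 ∨ u = v + 1 ∨ (u = 0 ∧ v = n) ∨ (u = n ∧ v = 0)

/-- An expanding search of the cycle `C n`, encoded as a permutation of `Fin n`
(position `j` searches vertex `(σ j : ℕ) + 1 ∈ {1, …, n}`): every searched vertex
must be adjacent to the root `0` or to some previously searched vertex. -/
def IsExpandingSearch (n : ℕ) (σ : Equiv.Perm (Fin n)) : Prop :=
  ∀ j : Fin n, CycleAdj n ((σ j : ℕ) + 1) 0 ∨
    ∃ i : Fin n, i < j ∧ CycleAdj n ((σ j : ℕ) + 1) ((σ i : ℕ) + 1)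

theorem search_pos_lower (n : ℕ) (σ : Equiv.Perm (Fin n)) (hσ : IsExpandingSearch n σ) :
    ∀ k : ℕ, ∀ j : Fin n, (j : ℕ) = k →
      (σ j : ℕ) + 1 ≤ k + 1 ∨ n ≤ (σ j : ℕ) + k + 1 := by
  intro k
  induction k using Nat.strong_induction_on with
  | _ k ih =>
    intro j hj
    have h1 := (σ j).isLt
    rcases hσ j with h | ⟨i, hij, h⟩
    · unfold CycleAdj at h
      omega
    · have hij' : (i : ℕ) < k := by rw [← hj]; exact hij
      have h2 := ih i hij' i rfl
      have h3 := (σ i).isLt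
      unfold CycleAdj at h
      omega

/-- The Hider's guarantee in Theorem 3: with `m = ⌊(n+1)/2⌋`, for every expanding
search `σ` of `C n`, `p^(σ⁻¹ m) + p^(σ⁻¹ (n+1-m)) ≤ p^m + p^(n+1-m)`, where `σ⁻¹ v`
is the (1-indexed) position at which vertex `v` is searched. -/
theorem hider_guarantee_equal_probs (p : ℝ) (hp0 : 0 < p) (hp1 : p < 1)
    (n : ℕ) (hn : 1 ≤ n) (σ : Equiv.Perm (Fin n)) (hσ : IsExpandingSearch n σ) :
    p ^ (((σ.symm ⟨(n + 1) / 2 - 1, by omega⟩ : Fin n) : ℕ) + 1) +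
      p ^ (((σ.symm ⟨n - (n + 1) / 2, by omega⟩ : Fin n) : ℕ) + 1) ≤
    p ^ ((n + 1) / 2) + p ^ (n + 1 - (n + 1) / 2) := by
  have key : ∀ v : Fin n, (v : ℕ) ≤ (σ.symm v : ℕ) ∨ n ≤ (v : ℕ) + (σ.symm v : ℕ) + 1 := by
    intro v
    have h := search_pos_lower n σ hσ _ (σ.symm v) rfl
    rw [Equiv.apply_symm_apply] at h
    omega
  have mono : ∀ a b : ℕ, a ≤ b → p ^ b ≤ p ^ a := fun a b h =>
    pow_le_pow_of_le_one hp0.le hp1.le h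
  have ha := key ⟨(n + 1) / 2 - 1, by omega⟩
  have hb := key ⟨n - (n + 1) / 2, by omega⟩
  have hne : (n + 1) / 2 - 1 ≠ n - (n + 1) / 2 →
      ((σ.symm ⟨(n + 1) / 2 - 1, by omega⟩ : Fin n) : ℕ) ≠
      ((σ.symm ⟨n - (n + 1) / 2, by omega⟩ : Fin n) : ℕ) := by
    intro h h'
    have := σ.symm.injective (Fin.ext h')
    exact h (congrArg Fin.val this)
  generalize ((σ.symm ⟨(n + 1) / 2 - 1, by omega⟩ : Fin n) : ℕ) = a at *
  generalize ((σ.symm ⟨n - (n + 1) / 2, by omega⟩ : Fin n) : ℕ) = b at *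
  simp only at ha hb
  rcases le_total a b with h | h
  · exact add_le_add (mono _ _ (by omega)) (mono _ _ (by omega))
  · rw [add_comm]
    exact add_le_add (mono _ _ (by omega)) (mono _ _ (by omega))
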